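/- arXiv:2004.14240 — 2 statements merged into one kernel-verified Lean document; each statement's English description precedes it below -/
import Mathlib

section
/- Let S be a symmetric 3×3 real matrix with trace S = 0, let v ∈ ℝ³, and set w = S·v. Define the 3-tensor T by T_{ijk} = 2·(S_{ik}·v_j − S_{jk}·v_i) + (w_j·δ_{ik} − w_i·δ_{jk}), where δ is the Kronecker delta. Then Σ_{i,j,k} (T_{ijk})² = 8·‖S‖²·‖v‖² − 12·‖S·v‖², where ‖S‖² = Σ_{i,j} (S_{ij})² is the squared Frobenius norm and ‖·‖ on vectors is the Euclidean norm. -/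
open Matrix Finset

/-!
Write `(P ∧ a)_{ijk} = P_{ik} a_j - P_{jk} a_i`, so that `T = 2 (S ∧ v) + 1 ∧ Sv`. Pairing `P ∧ a`
with a tensor antisymmetric in `i, j` is the same as pairing `2 P_{ik} a_j` with it, which gives
`⟨P ∧ a, Q ∧ b⟩ = 2 (⟨P, Q⟩ ⟨a, b⟩ - ⟨Pᵀ b, Qᵀ a⟩)`. Expanding `|T|²` by bilinearity then leaves
three instances of this formula. In dimension `n`, for symmetric trace-free `S`, the coefficient of
`‖S v‖²` is `-8 - 8 + 2 (n - 1) = 2 n - 18`.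
-/

section FluidTensor

variable {ι κ R : Type*} [CommRing R]

/-- The antisymmetrization of `P ⊗ a` over the vector index and the row index of `P`, without the
factor `1 / 2`. The column index of `P` comes last, as in the Cotton tensor `C_{ijk}`. -/
def vecWedge (P : Matrix ι κ R) (a : ι → R) (i j : ι) (k : κ) : R :=
  P i k * a j - P j k * a i

theorem vecWedge_swap (P : Matrix ι κ R) (a : ι → R) (i j : ι) (k : κ) :
    vecWedge P a j i k = -vecWedge P a i j k := by
  simp only [vecWedge, neg_sub]

variable [Fintype ι] [Fintype κ]

theorem sum_vecWedge_mul_of_antisymm (P : Matrix ι κ R) (a : ι → R) {X : ι → ι → κ → R}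
    (hX : ∀ i j k, X j i k = -X i j k) :
    ∑ i, ∑ j, ∑ k, vecWedge P a i j k * X i j k =
      2 * ∑ i, ∑ j, ∑ k, P i k * a j * X i j k := by
  have relabel : ∑ i, ∑ j, ∑ k, P j k * a i * X i j k =
      -∑ i, ∑ j, ∑ k, P i k * a j * X i j k := by
    rw [sum_comm]
    simp only [← sum_neg_distrib]
    congr! 3 with i _ j _ k
    rw [hX i j k, mul_neg]
  simp only [vecWedge, sub_mul, sum_sub_distrib, relabel]
  ring

theorem sum_mul_vecWedge (P Q : Matrix ι κ R) (a b : ι → R) :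
    ∑ i, ∑ j, ∑ k, P i k * a j * vecWedge Q b i j k =
      (∑ i, ∑ k, P i k * Q i k) * (a ⬝ᵥ b) - (b ᵥ* P) ⬝ᵥ (a ᵥ* Q) := by
  have direct : ∑ i, ∑ j, ∑ k, (P i k * Q i k) * (a j * b j) =
      (∑ i, ∑ k, P i k * Q i k) * (a ⬝ᵥ b) := by
    simp only [dotProduct, sum_mul_sum, ← sum_mul]
  have crossed : ∑ i, ∑ j, ∑ k, (b i * P i k) * (a j * Q j k) = (b ᵥ* P) ⬝ᵥ (a ᵥ* Q) := by
    calc ∑ i, ∑ j, ∑ k, (b i * P i k) * (a j * Q j k)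
        = ∑ i, ∑ k, ∑ j, (b i * P i k) * (a j * Q j k) := sum_congr rfl fun _ _ => sum_comm
      _ = ∑ k, ∑ i, ∑ j, (b i * P i k) * (a j * Q j k) := sum_comm
      _ = (b ᵥ* P) ⬝ᵥ (a ᵥ* Q) := by simp only [vecMul, dotProduct, sum_mul_sum]
  rw [← direct, ← crossed]
  simp only [← sum_sub_distrib, vecWedge]
  congr! 3
  ring

theorem sum_vecWedge_mul_vecWedge (P Q : Matrix ι κ R) (a b : ι → R) :
    ∑ i, ∑ j, ∑ k, vecWedge P a i j k * vecWedge Q b i j k =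
      2 * ((∑ i, ∑ k, P i k * Q i k) * (a ⬝ᵥ b) - (b ᵥ* P) ⬝ᵥ (a ᵥ* Q)) := by
  rw [sum_vecWedge_mul_of_antisymm P a (vecWedge_swap Q b), sum_mul_vecWedge]

theorem sum_vecWedge_sq (P : Matrix ι κ R) (a : ι → R) :
    ∑ i, ∑ j, ∑ k, vecWedge P a i j k ^ 2 =
      2 * ((∑ i, ∑ k, P i k ^ 2) * (a ⬝ᵥ a) - (a ᵥ* P) ⬝ᵥ (a ᵥ* P)) := by
  simp only [sq, sum_vecWedge_mul_vecWedge]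

variable [DecidableEq ι]

theorem sum_vecWedge_one_sq (b : ι → R) :
    ∑ i, ∑ j, ∑ k, vecWedge (1 : Matrix ι ι R) b i j k ^ 2 =
      2 * (Fintype.card ι - 1) * (b ⬝ᵥ b) := by
  rw [sum_vecWedge_sq, vecMul_one]
  simp only [one_apply, ite_pow, one_pow, ne_eq, OfNat.ofNat_ne_zero, not_false_eq_true, zero_pow,
    sum_ite_eq, mem_univ, if_true, sum_const, card_univ, nsmul_one]
  ring

theorem sum_vecWedge_mul_vecWedge_one (P : Matrix ι ι R) (a b : ι → R) :
    ∑ i, ∑ j, ∑ k, vecWedge P a i j k * vecWedge (1 : Matrix ι ι R) b i j k =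
      2 * (P.trace * (a ⬝ᵥ b) - b ⬝ᵥ P *ᵥ a) := by
  rw [sum_vecWedge_mul_vecWedge, vecMul_one, ← dotProduct_mulVec]
  simp only [one_apply, mul_ite, mul_one, mul_zero, sum_ite_eq, mem_univ, if_true, trace,
    diag_apply]

theorem norm_sq_fluid_tensor_general (S : Matrix ι ι R) (v : ι → R) (T : ι → ι → ι → R)
    (hT : ∀ i j k, T i j k =
      2 * (S i k * v j - S j k * v i) +
        ((S *ᵥ v) j * (if i = k then (1 : R) else 0) -
          (S *ᵥ v) i * (if j = k then (1 : R) else 0))) :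
    ∑ i, ∑ j, ∑ k, T i j k ^ 2 =
      8 * (∑ i, ∑ j, S i j ^ 2) * (∑ i, v i ^ 2) - 8 * ∑ i, (v ᵥ* S) i ^ 2 +
        8 * S.trace * (v ⬝ᵥ S *ᵥ v) + (2 * Fintype.card ι - 10) * ∑ i, (S *ᵥ v) i ^ 2 := by
  have decomposition (i j k : ι) :
      T i j k = 2 * vecWedge S v i j k + vecWedge 1 (S *ᵥ v) i j k := by
    rw [hT, vecWedge, vecWedge, one_apply, one_apply]
    ring
  have dotProduct_self_eq (x : ι → R) : x ⬝ᵥ x = ∑ i, x i ^ 2 := by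
    simp only [dotProduct, sq]
  have expansion : ∑ i, ∑ j, ∑ k, T i j k ^ 2 =
      4 * ∑ i, ∑ j, ∑ k, vecWedge S v i j k ^ 2 +
        4 * ∑ i, ∑ j, ∑ k, vecWedge S v i j k * vecWedge (1 : Matrix ι ι R) (S *ᵥ v) i j k +
        ∑ i, ∑ j, ∑ k, vecWedge (1 : Matrix ι ι R) (S *ᵥ v) i j k ^ 2 := by
    simp only [mul_sum, ← sum_add_distrib, decomposition]
    congr! 3
    ring
  rw [expansion, sum_vecWedge_sq, sum_vecWedge_mul_vecWedge_one, sum_vecWedge_one_sq]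
  simp only [dotProduct_self_eq]
  ring

end FluidTensor

/-- Squared norm of the covariant 3-tensor
`T_{ijk} = 2(S_{ik} v_j − S_{jk} v_i) + ((Sv)_j δ_{ik} − (Sv)_i δ_{jk})` built from a
symmetric trace-free `S` and a vector `v` in dimension 3:
`|T|² = 8 ‖S‖² ‖v‖² − 12 ‖S v‖²`. -/
theorem norm_sq_fluid_tensor (S : Matrix (Fin 3) (Fin 3) ℝ) (hS : S.IsSymm)
    (htr : S.trace = 0) (v : Fin 3 → ℝ)
    (T : Fin 3 → Fin 3 → Fin 3 → ℝ)
    (hT : ∀ i j k, T i j k =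
      2 * (S i k * v j - S j k * v i) +
        ((S.mulVec v) j * (if i = k then (1 : ℝ) else 0) -
          (S.mulVec v) i * (if j = k then (1 : ℝ) else 0))) :
    ∑ i, ∑ j, ∑ k, (T i j k) ^ 2 =
      8 * (∑ i, ∑ j, (S i j) ^ 2) * (∑ i, (v i) ^ 2) -
        12 * ∑ i, ((S.mulVec v) i) ^ 2 := by
  have mulVec_eq_vecMul : S *ᵥ v = v ᵥ* S := by rw [← vecMul_transpose, hS.eq]
  rw [norm_sq_fluid_tensor_general S v T hT, htr, Fintype.card_fin, mulVec_eq_vecMul]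
  ring
end

section
/- Let m > 0 and c, d be real constants, and define F(x) = (c·x² + d)·(1 − x²)^{-3} and G(x) = 6·F(x)/(1 − x²) − 2c·(1 − x²)^{-3}. Let f(r) = 1 − m/r for r > m. Then the limit as r → ∞ of 4π·r²·( F(f(r))·f(r)^{-1}·(d/dr)(f′(r)²) + G(f(r))·f′(r)³ ) equals −(c + d)·π/(2m). -/
open Real Filter

open scoped Topology

/-! Measure every factor by its power of `r`: `1 - f² ~ 2m / r`, `f' ~ m / r²` and
`(f'²)' ~ -4m² / r⁵`, so to leading order `F(f)` is `(c + d) r³ / (8m³)` and `G(f)` is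
`3(c + d) r⁴ / (8m⁴)`, the `c`-term of `G(f)` being only `O(r³)`. Both products are thus of order
`r⁻²`, which cancels the area factor, and the limit is `4π (c + d) (-1/2 + 3/8) / m`. -/

/-- The first Robinson function `F`, with parameters `c` and `d`. -/
noncomputable def robinsonF (c d x : ℝ) : ℝ :=
  (c * x ^ 2 + d) * ((1 - x ^ 2) ^ 3)⁻¹

/-- The second Robinson function `G`, with parameters `c` and `d`. -/
noncomputable def robinsonG (c d x : ℝ) : ℝ :=
  6 * robinsonF c d x / (1 - x ^ 2) - 2 * c * ((1 - x ^ 2) ^ 3)⁻¹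

/-- The radial lapse `f` of an asymptotically flat end of mass `m`: `f r = 1 - m / r` to leading
order as `r → ∞`, and this expansion may be differentiated twice. For `m ≠ 0` the limits force `f`
to be twice differentiable near infinity, since `deriv` takes the value `0` elsewhere. -/
structure HasMassExpansion (f : ℝ → ℝ) (m : ℝ) : Prop where
  tendsto_mul_one_sub : Tendsto (fun r => r * (1 - f r)) atTop (𝓝 m)
  tendsto_sq_mul_deriv : Tendsto (fun r => r ^ 2 * deriv f r) atTop (𝓝 m)
  tendsto_cube_mul_deriv_deriv :
    Tendsto (fun r => r ^ 3 * deriv (deriv f) r) atTop (𝓝 (-2 * m))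

theorem deriv_eventuallyEq_atTop {E : Type*} [NormedAddCommGroup E] [NormedSpace ℝ E]
    {f g : ℝ → E} (h : f =ᶠ[atTop] g) : deriv f =ᶠ[atTop] deriv g := by
  obtain ⟨a, ha⟩ := eventually_atTop.1 h
  filter_upwards [eventually_gt_atTop a] with r hr
  exact EventuallyEq.deriv_eq ((eventually_gt_nhds hr).mono fun s hs => ha s hs.le)

theorem deriv_const_div_pow {𝕜 : Type*} [NontriviallyNormedField 𝕜] (a : 𝕜) (n : ℕ) :
    deriv (fun x => a / x ^ n) = fun x => -n * a / x ^ (n + 1) := by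
  ext x
  have h_div (y : 𝕜) (k : ℕ) : a / y ^ k = a * y ^ (-k : ℤ) := by
    rw [zpow_neg, zpow_natCast, div_eq_mul_inv]
  simp only [h_div, deriv_const_mul_field, deriv_zpow, mul_div_assoc]
  push_cast
  rw [neg_add', mul_left_comm]

theorem deriv_one_sub_const_div {𝕜 : Type*} [NontriviallyNormedField 𝕜] (a : 𝕜) :
    deriv (fun x => 1 - a / x) = fun x => a / x ^ 2 := by
  ext x
  simp [div_eq_mul_inv]

namespace HasMassExpansion

variable {f g : ℝ → ℝ} {m : ℝ}

theorem congr (hf : HasMassExpansion f m) (h : f =ᶠ[atTop] g) : HasMassExpansion g m := by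
  have h' := deriv_eventuallyEq_atTop h
  have h'' := deriv_eventuallyEq_atTop h'
  refine ⟨hf.tendsto_mul_one_sub.congr' ?_, hf.tendsto_sq_mul_deriv.congr' ?_,
    hf.tendsto_cube_mul_deriv_deriv.congr' ?_⟩
  · filter_upwards [h] with r hr using by rw [hr]
  · filter_upwards [h'] with r hr using by rw [hr]
  · filter_upwards [h''] with r hr using by rw [hr]

theorem one_sub_const_div (m : ℝ) : HasMassExpansion (fun r => 1 - m / r) m := by
  refine ⟨tendsto_const_nhds.congr' ?_, tendsto_const_nhds.congr' ?_,
    tendsto_const_nhds.congr' ?_⟩ <;> filter_upwards [eventually_ne_atTop 0] with r hr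
  · field_simp
    ring
  · rw [deriv_one_sub_const_div]
    field_simp
  · rw [deriv_one_sub_const_div, deriv_const_div_pow]
    push_cast
    field_simp

theorem tendsto_pow_five_mul_deriv_sq (hf : HasMassExpansion f m) (hm : m ≠ 0) :
    Tendsto (fun r => r ^ 5 * deriv (fun s => deriv f s ^ 2) r) atTop (𝓝 (-4 * m ^ 2)) := by
  have h_ne : ∀ᶠ r in atTop, r ^ 3 * deriv (deriv f) r ≠ 0 :=
    hf.tendsto_cube_mul_deriv_deriv.eventually_ne (by simpa using hm)
  have h_lim := (hf.tendsto_sq_mul_deriv.mul hf.tendsto_cube_mul_deriv_deriv).const_mul 2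
  rw [show 2 * (m * (-2 * m)) = -4 * m ^ 2 by ring] at h_lim
  refine h_lim.congr' ?_
  filter_upwards [h_ne] with r hr
  have h_diff : DifferentiableAt ℝ (deriv f) r :=
    differentiableAt_of_deriv_ne_zero (right_ne_zero_of_mul hr)
  rw [deriv_fun_pow h_diff]
  push_cast
  ring

end HasMassExpansion

section RobinsonAsymptotics

variable {f : ℝ → ℝ} {m : ℝ}

theorem tendsto_one_of_tendsto_mul_one_sub
    (hf : Tendsto (fun r => r * (1 - f r)) atTop (𝓝 m)) : Tendsto f atTop (𝓝 1) := by
  have h_lim := (hf.div_atTop tendsto_id).const_sub 1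
  rw [sub_zero] at h_lim
  refine h_lim.congr' ?_
  filter_upwards [eventually_ne_atTop 0] with r hr
  rw [id, mul_div_cancel_left₀ _ hr, sub_sub_cancel]

theorem tendsto_mul_one_sub_sq
    (hf : Tendsto (fun r => r * (1 - f r)) atTop (𝓝 m)) :
    Tendsto (fun r => r * (1 - f r ^ 2)) atTop (𝓝 (2 * m)) := by
  have h_lim := hf.mul ((tendsto_one_of_tendsto_mul_one_sub hf).const_add 1)
  rw [show m * (1 + 1) = 2 * m by ring] at h_lim
  exact h_lim.congr fun r => by ring

theorem tendsto_inv_one_sub_sq_cube_div_cube (hm : m ≠ 0)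
    (hf : Tendsto (fun r => r * (1 - f r)) atTop (𝓝 m)) :
    Tendsto (fun r => ((1 - f r ^ 2) ^ 3)⁻¹ / r ^ 3) atTop (𝓝 ((2 * m) ^ 3)⁻¹) := by
  refine (((tendsto_mul_one_sub_sq hf).pow 3).inv₀ (by positivity)).congr fun r => ?_
  rw [mul_pow, mul_inv_rev, div_eq_mul_inv]

theorem tendsto_robinsonF_div_cube (c d : ℝ) (hm : m ≠ 0)
    (hf : Tendsto (fun r => r * (1 - f r)) atTop (𝓝 m)) :
    Tendsto (fun r => robinsonF c d (f r) / r ^ 3) atTop (𝓝 ((c + d) / (8 * m ^ 3))) := by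
  have h_num := (((tendsto_one_of_tendsto_mul_one_sub hf).pow 2).const_mul c).add_const d
  have h_lim := h_num.mul (tendsto_inv_one_sub_sq_cube_div_cube hm hf)
  rw [show (c * 1 ^ 2 + d) * ((2 * m) ^ 3)⁻¹ = (c + d) / (8 * m ^ 3) by ring] at h_lim
  exact h_lim.congr fun r => (mul_div_assoc _ _ _).symm

theorem tendsto_robinsonG_div_pow_four (c d : ℝ) (hm : m ≠ 0)
    (hf : Tendsto (fun r => r * (1 - f r)) atTop (𝓝 m)) :
    Tendsto (fun r => robinsonG c d (f r) / r ^ 4) atTop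
      (𝓝 (3 * (c + d) / (8 * m ^ 4))) := by
  have h_main := ((tendsto_robinsonF_div_cube c d hm hf).const_mul 6).div
    (tendsto_mul_one_sub_sq hf) (by positivity)
  have h_error := ((tendsto_inv_one_sub_sq_cube_div_cube hm hf).const_mul (2 * c)).mul
    tendsto_inv_atTop_zero
  have h_lim := h_main.sub h_error
  rw [show 6 * ((c + d) / (8 * m ^ 3)) / (2 * m) - 2 * c * ((2 * m) ^ 3)⁻¹ * 0
    = 3 * (c + d) / (8 * m ^ 4) by ring] at h_lim
  refine h_lim.congr fun r => ?_
  simp only [Pi.div_apply, robinsonG, div_eq_mul_inv, mul_inv_rev]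
  ring

end RobinsonAsymptotics

theorem radial_flux_limit_general {m c d : ℝ} (hm : m ≠ 0) {F G : ℝ → ℝ}
    (hF : ∀ x : ℝ, F x = (c * x ^ 2 + d) * ((1 - x ^ 2) ^ 3)⁻¹)
    (hG : ∀ x : ℝ, G x = 6 * F x / (1 - x ^ 2) - 2 * c * ((1 - x ^ 2) ^ 3)⁻¹)
    {f : ℝ → ℝ} (hf : HasMassExpansion f m) :
    Tendsto (fun r : ℝ =>
        4 * π * r ^ 2 *
          (F (f r) * (f r)⁻¹ * deriv (fun s : ℝ => (deriv f s) ^ 2) r +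
            G (f r) * (deriv f r) ^ 3))
      atTop (𝓝 (-(c + d) * π / (2 * m))) := by
  obtain rfl : F = robinsonF c d := funext hF
  obtain rfl : G = robinsonG c d := funext hG
  have h_one_sub := hf.tendsto_mul_one_sub
  have h_inv := (tendsto_one_of_tendsto_mul_one_sub h_one_sub).inv₀ one_ne_zero
  have h_F := ((tendsto_robinsonF_div_cube c d hm h_one_sub).mul h_inv).mul
    (hf.tendsto_pow_five_mul_deriv_sq hm)
  have h_G := (tendsto_robinsonG_div_pow_four c d hm h_one_sub).mul
    (hf.tendsto_sq_mul_deriv.pow 3)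
  have h_lim := (h_F.add h_G).const_mul (4 * π)
  have h_value : 4 * π * ((c + d) / (8 * m ^ 3) * 1⁻¹ * (-4 * m ^ 2) +
      3 * (c + d) / (8 * m ^ 4) * m ^ 3) = -(c + d) * π / (2 * m) := by
    field_simp
    ring
  rw [h_value] at h_lim
  refine h_lim.congr' ?_
  filter_upwards [eventually_ne_atTop 0] with r hr
  field_simp

/-- Radial flux computation behind equation (3.4): for `f(r) = 1 − m/r` (restricted to
`r > m`) and the Robinson functions `F`, `G`, the flux expression
`4π r² (F(f) f⁻¹ (|∇f|²)' + G(f) f'³)` tends to `−(c+d)π/(2m)` as `r → ∞`. -/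
theorem radial_flux_limit (m c d : ℝ) (hm : 0 < m) (F G : ℝ → ℝ)
    (hF : ∀ x : ℝ, F x = (c * x ^ 2 + d) * ((1 - x ^ 2) ^ 3)⁻¹)
    (hG : ∀ x : ℝ, G x = 6 * F x / (1 - x ^ 2) - 2 * c * ((1 - x ^ 2) ^ 3)⁻¹)
    (f : ℝ → ℝ) (hf : ∀ r : ℝ, m < r → f r = 1 - m / r) :
    Tendsto (fun r : ℝ =>
        4 * π * r ^ 2 *
          (F (f r) * (f r)⁻¹ * deriv (fun s : ℝ => (deriv f s) ^ 2) r +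
            G (f r) * (deriv f r) ^ 3))
      atTop (nhds (-(c + d) * π / (2 * m))) :=
  radial_flux_limit_general hm.ne' hF hG <| (HasMassExpansion.one_sub_const_div m).congr <|
    (eventually_gt_atTop m).mono fun r hr => (hf r hr).symm
end
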